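/- The outer automorphism group of SL(2,ℝ) is ℤ/2, generated by the class of conjugation by the matrix ((0,1),(1,0)); i.e., Aut(SL(2,ℝ))/Inn(SL(2,ℝ)) ≅ ℤ/2 and conjugation by ((0,1),(1,0)) is an automorphism of SL(2,ℝ) that is not inner. -/

import Mathlib

open Matrix

abbrev SL2R := Matrix.SpecialLinearGroup (Fin 2) ℝ

/-- upper unipotent -/
def uu (t : ℝ) : SL2R := ⟨!![1, t; 0, 1], by simp [Matrix.det_fin_two]⟩

/-- Weyl element -/
def ww : SL2R := ⟨!![0, 1; -1, 0], by simp [Matrix.det_fin_two]⟩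

/-- diagonal -/
noncomputable def hh (a : ℝ) (ha : a ≠ 0) : SL2R :=
  ⟨!![a, 0; 0, a⁻¹], by simp [Matrix.det_fin_two, ha]⟩

theorem sl_ext {A B : SL2R} (h00 : A.1 0 0 = B.1 0 0) (h01 : A.1 0 1 = B.1 0 1)
    (h10 : A.1 1 0 = B.1 1 0) (h11 : A.1 1 1 = B.1 1 1) : A = B := by
  apply Subtype.ext
  ext i j
  fin_cases i <;> fin_cases j <;> assumption

theorem sl_det (A : SL2R) : A.1 0 0 * A.1 1 1 - A.1 0 1 * A.1 1 0 = 1 := by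
  have := A.2
  rwa [Matrix.det_fin_two] at this

theorem mul00 (A B : SL2R) : (A * B).1 0 0 = A.1 0 0 * B.1 0 0 + A.1 0 1 * B.1 1 0 := by
  change (A.1 * B.1) 0 0 = _
  simp [Matrix.mul_apply, Fin.sum_univ_two]
theorem mul01 (A B : SL2R) : (A * B).1 0 1 = A.1 0 0 * B.1 0 1 + A.1 0 1 * B.1 1 1 := by
  change (A.1 * B.1) 0 1 = _
  simp [Matrix.mul_apply, Fin.sum_univ_two]
theorem mul10 (A B : SL2R) : (A * B).1 1 0 = A.1 1 0 * B.1 0 0 + A.1 1 1 * B.1 1 0 := by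
  change (A.1 * B.1) 1 0 = _
  simp [Matrix.mul_apply, Fin.sum_univ_two]
theorem mul11 (A B : SL2R) : (A * B).1 1 1 = A.1 1 0 * B.1 0 1 + A.1 1 1 * B.1 1 1 := by
  change (A.1 * B.1) 1 1 = _
  simp [Matrix.mul_apply, Fin.sum_univ_two]

theorem one00 : (1 : SL2R).1 0 0 = 1 := rfl
theorem one01 : (1 : SL2R).1 0 1 = 0 := rfl
theorem one10 : (1 : SL2R).1 1 0 = 0 := rfl
theorem one11 : (1 : SL2R).1 1 1 = 1 := rfl
theorem uu00 (t : ℝ) : (uu t).1 0 0 = 1 := rfl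
theorem uu01 (t : ℝ) : (uu t).1 0 1 = t := rfl
theorem uu10 (t : ℝ) : (uu t).1 1 0 = 0 := rfl
theorem uu11 (t : ℝ) : (uu t).1 1 1 = 1 := rfl
theorem ww00 : ww.1 0 0 = 0 := rfl
theorem ww01 : ww.1 0 1 = 1 := rfl
theorem ww10 : ww.1 1 0 = -1 := rfl
theorem ww11 : ww.1 1 1 = 0 := rfl
theorem hh00 (a : ℝ) (ha : a ≠ 0) : (hh a ha).1 0 0 = a := rfl
theorem hh01 (a : ℝ) (ha : a ≠ 0) : (hh a ha).1 0 1 = 0 := rfl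
theorem hh10 (a : ℝ) (ha : a ≠ 0) : (hh a ha).1 1 0 = 0 := rfl
theorem hh11 (a : ℝ) (ha : a ≠ 0) : (hh a ha).1 1 1 = a⁻¹ := rfl

theorem uu_add (s t : ℝ) : uu (s + t) = uu s * uu t := by
  apply sl_ext <;> simp only [mul00, mul01, mul10, mul11, uu00, uu01, uu10, uu11] <;> ring

theorem uu_zero : uu 0 = 1 := by
  apply sl_ext <;> rfl

theorem uu_inj {s t : ℝ} (h : uu s = uu t) : s = t := by
  have := congrArg (fun A : SL2R => A.1 0 1) h
  exact this

theorem hh_uu (a : ℝ) (ha : a ≠ 0) (t : ℝ) : hh a ha * uu t = uu (a ^ 2 * t) * hh a ha := by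
  apply sl_ext <;>
    simp only [mul00, mul01, mul10, mul11, uu00, uu01, uu10, uu11, hh00, hh01, hh10, hh11] <;>
    field_simp <;> ring

/-- trace -/
def tt (A : SL2R) : ℝ := A.1 0 0 + A.1 1 1

theorem tt_comm (A B : SL2R) : tt (A * B) = tt (B * A) := by
  simp only [tt, mul00, mul11]; ring

theorem tt_conj {g A B : SL2R} (h : g * A = B * g) : tt A = tt B := by
  have : A = g⁻¹ * (B * g) := by rw [← h]; group
  rw [this, tt_comm]; simp

theorem tt_sq (A : SL2R) : tt (A * A) = tt A ^ 2 - 2 := by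
  have := sl_det A
  simp only [tt, mul00, mul11]; linear_combination -2 * this

theorem cube_of_tt {A : SL2R} (h : tt A = -1) : A * A * A = 1 := by
  have hd := sl_det A
  have h' : A.1 1 1 = -1 - A.1 0 0 := by unfold tt at h; linarith
  rw [h'] at hd
  apply sl_ext <;> simp only [mul00, mul01, mul10, mul11, one00, one01, one10, one11, h']
  · linear_combination (1 - A.1 0 0) * hd
  · linear_combination (-A.1 0 1) * hd
  · linear_combination (-A.1 1 0) * hd
  · linear_combination (2 + A.1 0 0) * hd

theorem tt_of_cube {A : SL2R} (h : A * A * A = 1) (h1 : A ≠ 1) : tt A = -1 := by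
  have hd := sl_det A
  have e00 := congrArg (fun A : SL2R => A.1 0 0) h
  have e01 := congrArg (fun A : SL2R => A.1 0 1) h
  have e10 := congrArg (fun A : SL2R => A.1 1 0) h
  have e11 := congrArg (fun A : SL2R => A.1 1 1) h
  simp only [mul00, mul01, mul10, mul11, one00, one01, one10, one11] at e00 e01 e10 e11
  unfold tt
  set a := A.1 0 0 with ha
  set b := A.1 0 1 with hb
  set c := A.1 1 0 with hc
  set d := A.1 1 1 with hd'
  by_contra hne
  have hne' : a + d + 1 ≠ 0 := fun h => hne (by linarith)
  -- A ^ 3 = (τ ^ 2 - 1) A - τ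
  have f01 : (a + d + 1) * ((a + d - 1) * b) = 0 := by
    linear_combination e01 + b * hd
  have f10 : (a + d + 1) * ((a + d - 1) * c) = 0 := by
    linear_combination e10 + c * hd
  have f00 : ((a + d) ^ 2 - 1) * a - (a + d) = 1 := by
    linear_combination e00 + (2 * a + d) * hd
  have f11 : ((a + d) ^ 2 - 1) * d - (a + d) = 1 := by
    linear_combination e11 + (2 * d + a) * hd
  have g00 : (a + d - 1) * a = 1 := by
    apply mul_left_cancel₀ hne'; linear_combination f00
  have g11 : (a + d - 1) * d = 1 := by
    apply mul_left_cancel₀ hne'; linear_combination f11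
  have hk : a + d - 1 ≠ 0 := fun h => by rw [h] at g00; simp at g00
  have g01 : b = 0 := by
    rcases mul_eq_zero.1 f01 with h | h
    · exact absurd h hne'
    · exact (mul_eq_zero.1 h).resolve_left hk
  have g10 : c = 0 := by
    rcases mul_eq_zero.1 f10 with h | h
    · exact absurd h hne'
    · exact (mul_eq_zero.1 h).resolve_left hk
  have had : a = d := mul_left_cancel₀ hk (g00.trans g11.symm)
  rw [g01, ← had] at hd
  rw [← had] at g00
  have ha1 : a = 1 := by linarith
  apply h1
  apply sl_ext
  · exact ha1
  · exact g01
  · exact g10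
  · exact had.symm.trans ha1

theorem tt_img (ψ : MulAut SL2R) (t : ℝ) : tt (ψ (uu t)) = 2 := by
  have h2 : (√2 : ℝ) ≠ 0 := by positivity
  have h := hh_uu (√2) h2 t
  rw [Real.sq_sqrt (by norm_num), two_mul, uu_add] at h
  have h' := congrArg ψ h
  rw [map_mul, map_mul, map_mul] at h'
  have h3 := tt_conj h'
  rw [tt_sq] at h3
  have h4 : (tt (ψ (uu t)) - 2) * (tt (ψ (uu t)) + 1) = 0 := by linear_combination -h3
  rcases mul_eq_zero.1 h4 with h | h
  · linarith
  · have := cube_of_tt (A := ψ (uu t)) (by linarith)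
    rw [← map_mul, ← map_mul, ← uu_add, ← uu_add] at this
    have h5 : uu (t + t + t) = 1 := by
      apply ψ.injective; rw [this, map_one]
    rw [← uu_zero] at h5
    have h6 := uu_inj h5
    have : t = 0 := by linarith
    rw [this, uu_zero, map_one]
    simp only [tt, one00, one11]; norm_num

/-- element with given entries -/
def mm (a b c d : ℝ) (h : a * d - b * c = 1) : SL2R :=
  ⟨!![a, b; c, d], by rw [Matrix.det_fin_two]; exact h⟩
theorem mm00 (a b c d : ℝ) (h : a * d - b * c = 1) : (mm a b c d h).1 0 0 = a := rfl
theorem mm01 (a b c d : ℝ) (h : a * d - b * c = 1) : (mm a b c d h).1 0 1 = b := rfl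
theorem mm10 (a b c d : ℝ) (h : a * d - b * c = 1) : (mm a b c d h).1 1 0 = c := rfl
theorem mm11 (a b c d : ℝ) (h : a * d - b * c = 1) : (mm a b c d h).1 1 1 = d := rfl

theorem unip_normal {X : SL2R} (ht : tt X = 2) (h1 : X ≠ 1) :
    ∃ g : SL2R, g * uu 1 = X * g ∨ g * uu (-1) = X * g := by
  have hd := sl_det X
  have h11 : X.1 1 1 = 2 - X.1 0 0 := by unfold tt at ht; linarith
  rw [h11] at hd
  rcases lt_trichotomy (X.1 1 0) 0 with hz | hz | hz
  · -- ε = 1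
    have hk : 0 < √(-(X.1 1 0)) := Real.sqrt_pos.2 (by linarith)
    have hk2 : √(-(X.1 1 0)) ^ 2 = -(X.1 1 0) := Real.sq_sqrt (by linarith)
    set k := √(-(X.1 1 0))
    have hz' : X.1 1 0 = -k ^ 2 := by linarith
    refine ⟨mm (k⁻¹ * (X.1 0 0 - 1)) (k⁻¹) (k⁻¹ * X.1 1 0) (0) ?_, Or.inl ?_⟩
    · rw [hz']; field_simp; ring
    · rw [hz'] at hd
      apply sl_ext <;> simp only [mul00, mul01, mul10, mul11, uu00, uu01, uu10, uu11, h11, hz',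
        mm00, mm01, mm10, mm11] <;> field_simp <;> linarith
  · have hx : X.1 0 0 = 1 := by
      rw [hz] at hd
      have : (X.1 0 0 - 1) ^ 2 = 0 := by linarith
      have := pow_eq_zero_iff (two_ne_zero) |>.1 this
      linarith
    have h11' : X.1 1 1 = 1 := by rw [h11, hx]; norm_num
    rcases lt_trichotomy (X.1 0 1) 0 with hy | hy | hy
    · have hk : 0 < √(-(X.1 0 1)) := Real.sqrt_pos.2 (by linarith)
      have hk2 : √(-(X.1 0 1)) ^ 2 = -(X.1 0 1) := Real.sq_sqrt (by linarith)
      set k := √(-(X.1 0 1))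
      have hz' : X.1 0 1 = -k ^ 2 := by linarith
      refine ⟨mm (k) (0) (0) (k⁻¹) ?_, Or.inr ?_⟩
      · field_simp; ring
      · apply sl_ext <;>
          simp only [mul00, mul01, mul10, mul11, uu00, uu01, uu10, uu11, h11', hz', hz, hx,
            mm00, mm01, mm10, mm11] <;> field_simp <;> ring
    · exact absurd (sl_ext hx hy hz h11') h1
    · have hk : 0 < √(X.1 0 1) := Real.sqrt_pos.2 (by linarith)
      have hk2 : √(X.1 0 1) ^ 2 = X.1 0 1 := Real.sq_sqrt (by linarith)
      set k := √(X.1 0 1)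
      have hz' : X.1 0 1 = k ^ 2 := by linarith
      refine ⟨mm (k) (0) (0) (k⁻¹) ?_, Or.inl ?_⟩
      · field_simp; ring
      · apply sl_ext <;>
          simp only [mul00, mul01, mul10, mul11, uu00, uu01, uu10, uu11, h11', hz', hz, hx,
            mm00, mm01, mm10, mm11] <;> field_simp <;> ring
  · have hk : 0 < √(X.1 1 0) := Real.sqrt_pos.2 (by linarith)
    have hk2 : √(X.1 1 0) ^ 2 = X.1 1 0 := Real.sq_sqrt (by linarith)
    set k := √(X.1 1 0)
    have hz' : X.1 1 0 = k ^ 2 := by linarith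
    refine ⟨mm (-k⁻¹ * (X.1 0 0 - 1)) (k⁻¹) (-k⁻¹ * X.1 1 0) (0) ?_, Or.inr ?_⟩
    · rw [hz']; field_simp; ring
    · rw [hz'] at hd
      apply sl_ext <;> simp only [mul00, mul01, mul10, mul11, uu00, uu01, uu10, uu11, h11, hz',
        mm00, mm01, mm10, mm11] <;> field_simp <;> linarith

theorem additive_id (f : ℝ → ℝ) (hadd : ∀ s t, f (s + t) = f s + f t) (h1 : f 1 = 1)
    (hpos : ∀ t, 0 ≤ t → 0 ≤ f t) (t : ℝ) : f t = t := by
  let F : ℝ →+ ℝ := AddMonoidHom.mk' f hadd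
  have hmono : Monotone f := by
    intro s t hst
    have := hadd s (t - s)
    rw [add_sub_cancel] at this
    have := hpos (t - s) (by linarith)
    linarith
  have hq : ∀ q : ℚ, f q = q := by
    intro q
    have := map_rat_smul F q (1 : ℝ)
    have h2 : F 1 = 1 := h1
    rw [h2] at this
    simpa [F, Rat.smul_def] using this
  apply le_antisymm
  · by_contra! h
    obtain ⟨q, hq1, hq2⟩ := exists_rat_btwn h
    have := hmono hq1.le
    rw [hq] at this
    linarith
  · by_contra! h
    obtain ⟨q, hq1, hq2⟩ := exists_rat_btwn h
    have := hmono hq2.le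
    rw [hq] at this
    linarith

theorem fix_uu (ψ : MulAut SL2R) (h : ψ (uu 1) = uu 1) (t : ℝ) : ψ (uu t) = uu t := by
  let f : ℝ → ℝ := fun t => (ψ (uu t)).1 0 1
  have hf : ∀ t, ψ (uu t) = uu (f t) := by
    intro t
    have hc : uu 1 * ψ (uu t) = ψ (uu t) * uu 1 := by
      conv_lhs => rw [← h]
      conv_rhs => rw [← h]
      rw [← map_mul, ← map_mul, ← uu_add, ← uu_add, add_comm]
    have ht := tt_img ψ t
    have e00 := congrArg (fun A : SL2R => A.1 0 0) hc
    have e01 := congrArg (fun A : SL2R => A.1 0 1) hc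
    simp only [mul00, mul01, uu00, uu01, uu10, uu11] at e00 e01
    unfold tt at ht
    apply sl_ext <;> simp only [uu00, uu01, uu10, uu11, f] <;> linarith
  have hadd : ∀ s t, f (s + t) = f s + f t := by
    intro s t
    apply uu_inj
    rw [← hf, uu_add, map_mul, hf, hf, uu_add]
  have h1 : f 1 = 1 := by apply uu_inj; rw [← hf, h]
  have hpos : ∀ t, 0 ≤ t → 0 ≤ f t := by
    intro t ht
    rcases ht.eq_or_lt with rfl | ht
    · have := hadd 0 0
      rw [add_zero] at this; linarith
    · have hs : √t ≠ 0 := (Real.sqrt_pos.2 ht).ne'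
      have hc := congrArg ψ (hh_uu (√t) hs 1)
      rw [Real.sq_sqrt ht.le, mul_one, map_mul, map_mul, h, hf] at hc
      have hd := sl_det (ψ (hh (√t) hs))
      have e00 := congrArg (fun A : SL2R => A.1 0 0) hc
      have e01 := congrArg (fun A : SL2R => A.1 0 1) hc
      have e11 := congrArg (fun A : SL2R => A.1 1 1) hc
      simp only [mul00, mul01, mul11, uu00, uu01, uu10, uu11] at e00 e01 e11
      set H := ψ (hh (√t) hs)
      have hr : H.1 1 0 = 0 := by linarith
      have hp : H.1 0 0 = f t * H.1 1 1 := by linarith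
      rw [hr] at hd
      have : f t = H.1 0 0 ^ 2 := by
        linear_combination (-f t) * hd - H.1 0 0 * hp
      rw [this]; positivity
  rw [hf, additive_id f hadd h1 hpos]

theorem fix_all (ψ : MulAut SL2R) (h : ∀ t, ψ (uu t) = uu t) (hw : ψ ww = ww) : ψ = 1 := by
  have key : ∀ A : SL2R, A.1 1 0 ≠ 0 → ψ A = A := by
    intro A hc
    have hd := sl_det A
    have : A = uu ((A.1 0 0 - 1) / A.1 1 0) * (ww * uu (-A.1 1 0) * (ww * ww * ww)) *
        uu ((A.1 1 1 - 1) / A.1 1 0) := by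
      apply sl_ext <;>
        simp only [mul00, mul01, mul10, mul11, uu00, uu01, uu10, uu11, ww00, ww01, ww10, ww11] <;>
        field_simp <;> first | linarith | linear_combination (-A.1 1 0) * hd
    generalize (A.1 0 0 - 1) / A.1 1 0 = x at this
    generalize (A.1 1 1 - 1) / A.1 1 0 = y at this
    generalize -A.1 1 0 = z at this
    rw [this]
    simp only [map_mul, h, hw]
  ext1 A
  change ψ A = A
  by_cases hc : A.1 1 0 = 0
  · have hd := sl_det A
    have h2 : ψ (ww * A) = ww * A := by
      apply key
      rw [mul10, ww10, ww11]
      intro h0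
      have : A.1 0 0 = 0 := by linarith
      rw [this, hc] at hd
      simp at hd
    rw [map_mul, hw] at h2
    exact mul_left_cancel h2
  · exact key A hc

theorem inner_of_fix (ψ : MulAut SL2R) (h : ψ (uu 1) = uu 1) :
    ψ ∈ (MulAut.conj : SL2R →* MulAut SL2R).range := by
  have hu := fix_uu ψ h
  set W := ψ ww with hW
  have hww : (ww * ww) * (ww * ww) = 1 := by
    apply sl_ext <;> simp [mul00, mul01, mul10, mul11, ww00, ww01, ww10, ww11, one00, one01, one10, one11]
  have hww1 : ww * ww ≠ 1 := by
    intro h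
    have := congrArg (fun A : SL2R => A.1 0 0) h
    simp only [mul00, ww00, ww01, ww10, one00] at this
    norm_num at this
  have htw : tt W = 0 := by
    have e : (W * W) * (W * W) = 1 := by rw [hW, ← map_mul, ← map_mul, hww, map_one]
    have e1 : W * W ≠ 1 := by
      rw [hW, ← map_mul]; intro h; apply hww1; apply ψ.injective; rw [h, map_one]
    by_contra h0
    have hd2 := sl_det (W * W)
    -- Y = W*W, Y*Y = 1 so tt Y = ± 2
    have hd := sl_det W
    generalize hY : W * W = Y at *
    have e00 := congrArg (fun A : SL2R => A.1 0 0) e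
    have e01 := congrArg (fun A : SL2R => A.1 0 1) e
    have e10 := congrArg (fun A : SL2R => A.1 1 0) e
    have e11 := congrArg (fun A : SL2R => A.1 1 1) e
    simp only [mul00, mul01, mul10, mul11, one00, one01, one10, one11] at e00 e01 e10 e11
    have hY4 := tt_sq Y
    rw [e] at hY4
    have : tt (1 : SL2R) = 2 := by simp only [tt, one00, one11]; norm_num
    rw [this] at hY4
    have hYW := tt_sq W
    rw [hY] at hYW
    have hne : tt Y ≠ 0 := by intro h; rw [h] at hY4; norm_num at hY4
    have h5 : (tt Y - 2) * (tt Y + 2) = 0 := by linear_combination -hY4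
    rcases mul_eq_zero.1 h5 with h6 | h6
    · have h7 : Y.1 0 0 + Y.1 1 1 = 2 := by unfold tt at h6; linarith
      apply e1
      apply sl_ext
      · rw [one00]; linear_combination (1/2) * e00 + (1/2) * hd2 - (1/2) * Y.1 0 0 * h7
      · rw [one01]; linear_combination (1/2) * e01 - (1/2) * Y.1 0 1 * h7
      · rw [one10]; linear_combination (1/2) * e10 - (1/2) * Y.1 1 0 * h7
      · rw [one11]; linear_combination (1/2) * e11 + (1/2) * hd2 - (1/2) * Y.1 1 1 * h7
    · apply h0
      have : tt W ^ 2 = 0 := by linarith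
      exact pow_eq_zero_iff two_ne_zero |>.1 this
  have hc : W.1 1 0 = -1 := by
    have e0 : tt (ww * uu 1) = -1 := by
      simp only [tt, mul00, mul11, uu00, uu01, uu10, uu11, ww00, ww01, ww10, ww11]; norm_num
    have e := congrArg ψ (cube_of_tt e0)
    simp only [map_mul, map_one, h] at e
    have e1 : W * uu 1 ≠ 1 := by
      intro h1
      have : ψ (ww * uu 1) = 1 := by rw [map_mul, h]; exact h1
      have : ww * uu 1 = 1 := by apply ψ.injective; rw [this, map_one]
      rw [this] at e0
      simp only [tt, one00, one11] at e0; norm_num at e0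
    have e2 := tt_of_cube (A := W * uu 1) (by simpa only [map_mul] using e) e1
    simp only [tt, mul00, mul11, uu00, uu01, uu10, uu11] at e2
    unfold tt at htw
    linarith
  have hd := sl_det W
  have h11 : W.1 1 1 = - W.1 0 0 := by unfold tt at htw; linarith
  rw [hc, h11] at hd
  -- W = uu (-a) * ww * uu a
  set a := W.1 0 0 with ha
  have hWe : W = uu (-a) * ww * uu a := by
    apply sl_ext <;>
      simp only [mul00, mul01, mul10, mul11, uu00, uu01, uu10, uu11, ww00, ww01, ww10, ww11, hc, h11, ← ha]
        <;> linarith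
  have hm : uu (-a) * uu a = 1 := by rw [← uu_add, neg_add_cancel, uu_zero]
  have hinv : (uu (-a))⁻¹ = uu a := inv_eq_of_mul_eq_one_right hm
  have : (MulAut.conj (uu (-a)))⁻¹ * ψ = 1 := by
    apply fix_all
    · intro t
      rw [MulAut.mul_apply, hu, ← map_inv, MulAut.conj_apply, inv_inv, hinv, ← uu_add, ← uu_add]
      congr 1; ring
    · rw [MulAut.mul_apply, ← hW, hWe, ← map_inv, MulAut.conj_apply, inv_inv, hinv]
      rw [← hinv]; group
  exact ⟨uu (-a), inv_mul_eq_one.1 this⟩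

theorem inner_of_conj (ψ : MulAut SL2R) (g : SL2R) (h : g * uu 1 = ψ (uu 1) * g) :
    ψ ∈ (MulAut.conj : SL2R →* MulAut SL2R).range := by
  have h1 := inner_of_fix ((MulAut.conj g)⁻¹ * ψ) (by
    rw [MulAut.mul_apply, ← map_inv, MulAut.conj_apply, inv_inv, mul_assoc, ← h]; group)
  have h2 : MulAut.conj g ∈ (MulAut.conj : SL2R →* MulAut SL2R).range := ⟨g, rfl⟩
  have := Subgroup.mul_mem _ h2 h1
  rwa [mul_inv_cancel_left] at this

/-- swap -/
def swp (A : SL2R) : SL2R := ⟨!![A.1 1 1, A.1 1 0; A.1 0 1, A.1 0 0], by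
  have := sl_det A
  rw [Matrix.det_fin_two]; simp; linarith⟩

theorem swp_swp (A : SL2R) : swp (swp A) = A := by
  apply sl_ext <;> rfl

/-- the outer automorphism -/
def phi : MulAut SL2R where
  toFun := swp
  invFun := swp
  left_inv := swp_swp
  right_inv := swp_swp
  map_mul' A B := by
    apply sl_ext <;> simp only [mul00, mul01, mul10, mul11] <;> simp [swp] <;>
      simp only [mul00, mul01, mul10, mul11, Matrix.mul_apply, Fin.sum_univ_two] <;> ring

/-- The outer automorphism group of `SL(2,ℝ)` is `ℤ/2`, generated by conjugation by
`s = ((0,1),(1,0))` (note `s⁻¹ = s`): there is an automorphism `φ` of `SL(2,ℝ)` acting as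
conjugation by `s`; `φ` is not inner; `φ² = 1`; and every automorphism of `SL(2,ℝ)` is
either inner or inner after composing with `φ`. -/
theorem out_sl2R_eq_Z2 :
    ∃ φ : MulAut SL2R,
      (∀ A : SL2R, (↑(φ A) : Matrix (Fin 2) (Fin 2) ℝ) =
        !![0, 1; 1, 0] * (↑A : Matrix (Fin 2) (Fin 2) ℝ) * !![0, 1; 1, 0]) ∧
      φ ∉ (MulAut.conj : SL2R →* MulAut SL2R).range ∧
      φ * φ = 1 ∧
      (∀ ψ : MulAut SL2R, ψ ∈ (MulAut.conj : SL2R →* MulAut SL2R).range ∨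
        ψ * φ ∈ (MulAut.conj : SL2R →* MulAut SL2R).range) := by
  refine ⟨phi, ?_, ?_, ?_, ?_⟩
  · intro A
    change (swp A).1 = !![0, 1; 1, 0] * A.1 * !![0, 1; 1, 0]
    ext i j
    fin_cases i <;> fin_cases j <;> simp [swp, Matrix.mul_apply, Matrix.vecMul, dotProduct, Fin.sum_univ_two]
  · rintro ⟨g, hg⟩
    have h1 : MulAut.conj g (uu 1) = swp (uu 1) := by rw [hg]; rfl
    rw [MulAut.conj_apply, mul_inv_eq_iff_eq_mul] at h1
    have hd := sl_det g
    have s00 : (swp (uu 1)).1 0 0 = 1 := rfl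
    have s01 : (swp (uu 1)).1 0 1 = 0 := rfl
    have s10 : (swp (uu 1)).1 1 0 = 1 := rfl
    have s11 : (swp (uu 1)).1 1 1 = 1 := rfl
    have e10 := congrArg (fun A : SL2R => A.1 1 0) h1
    have e11 := congrArg (fun A : SL2R => A.1 1 1) h1
    simp only [mul10, mul11, uu00, uu01, uu10, uu11, s10, s11] at e10 e11
    have ha : g.1 0 0 = 0 := by linarith
    have hb : g.1 1 0 = g.1 0 1 := by linarith
    rw [ha, hb] at hd
    nlinarith [mul_self_nonneg (g.1 0 1)]
  · ext1 A
    exact swp_swp A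
  · intro ψ
    have hne : ψ (uu 1) ≠ 1 := by
      intro h
      have : uu 1 = uu 0 := by apply ψ.injective; rw [h, uu_zero, map_one]
      exact one_ne_zero (uu_inj this)
    obtain ⟨g, hg | hg⟩ := unip_normal (tt_img ψ 1) hne
    · exact Or.inl (inner_of_conj ψ g hg)
    · right
      have e1 : ww * uu (-1) = phi (uu 1) * ww := by
        change ww * uu (-1) = swp (uu 1) * ww
        have s00 : (swp (uu 1)).1 0 0 = 1 := rfl
        have s01 : (swp (uu 1)).1 0 1 = 0 := rfl
        have s10 : (swp (uu 1)).1 1 0 = 1 := rfl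
        have s11 : (swp (uu 1)).1 1 1 = 1 := rfl
        apply sl_ext <;>
          simp only [mul00, mul01, mul10, mul11, uu00, uu01, uu10, uu11, ww00, ww01, ww10, ww11,
            s00, s01, s10, s11] <;> norm_num
      have e2 := congrArg ψ e1
      rw [map_mul, map_mul] at e2
      have hn : uu (-1) = (uu 1)⁻¹ := by
        symm; apply inv_eq_of_mul_eq_one_right
        rw [← uu_add, add_neg_cancel, uu_zero]
      have e3 : g * uu 1 = ψ (uu (-1)) * g := by
        rw [hn, map_inv, eq_inv_mul_iff_mul_eq, ← mul_assoc, ← hg, hn]; group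
      apply inner_of_conj (ψ * phi) (ψ ww * g)
      rw [MulAut.mul_apply, mul_assoc, e3, ← mul_assoc, e2, mul_assoc]
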